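/- For every series-reduced finite tree T with |T| > 2 and every internal (non-leaf) vertex v of T, the value p(T,v) lies in the interval [2/3,1]; moreover, the set of values {p(T,v) : T a series-reduced finite tree with |T| > 2, v an internal vertex of T} is dense in [2/3,1]. -/

import Mathlib

/-- A subtree of a graph: a nonempty set of vertices inducing a connected subgraph. -/
def IsSubtree {V : Type*} (G : SimpleGraph V) (S : Finset V) : Prop :=
  S.Nonempty ∧ (G.induce (S : Set V)).Connected

/-- `N(T)`: the number of subtrees. -/
noncomputable def numSubtrees {V : Type*} [Fintype V] (G : SimpleGraph V) : ℕ :=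
  Nat.card {S : Finset V // IsSubtree G S}

/-- `N(T,v)`: the number of subtrees containing the vertex `v`. -/
noncomputable def numSubtreesContaining {V : Type*} [Fintype V] (G : SimpleGraph V) (v : V) : ℕ :=
  Nat.card {S : Finset V // IsSubtree G S ∧ v ∈ S}

/-- `p(T,v) = N(T,v)/N(T)`: the probability that a uniformly random subtree contains `v`. -/
noncomputable def subtreeProb {V : Type*} [Fintype V] (G : SimpleGraph V) (v : V) : ℝ :=
  (numSubtreesContaining G v : ℝ) / (numSubtrees G : ℝ)

/-- A graph is series-reduced if no vertex has degree 2. -/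
def SeriesReduced {V : Type*} (G : SimpleGraph V) : Prop :=
  ∀ v : V, Nat.card (G.neighborSet v) ≠ 2

/-!
To a vertex `v` of a tree `T` attach the triple `(k, a, n) = (deg v, N(T,v), N(T))`. Cutting an edge
`vc` leaves two trees; if `(k, a, n)` and `(l, b, m)` are their triples at `v` and at `c`, then `T`
has the triple `(k + 1, a(1 + b), n + m + ab)` at `v`, and `c` does not have degree `2` in `T` iff
`l ≠ 1`. So all triples are generated from `(0, 1, 1)` by this operation, and induction gives
`2 ^ k * (n - a - k + 4) ≤ 4 * a`, hence `2 * n ≤ 3 * a` for `k ≥ 3`.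

For density put `q = n / a`. Attaching a leaf to `v` acts as `q ↦ (q + 1) / 2`, and passing to a new
vertex joined to `v` and to a leaf acts as `q ↦ q / 2 + 1`, both up to an error of order `1 / a`.
These contractions by `1 / 2` map `[1, 2]` onto its two halves, so the values `q` with `k ≥ 2` are
dense in `[1, 2]`. One further leaf makes `k ≥ 3` and gives a dense subset of `[1, 3 / 2]`, the
interval of inverses of `[2 / 3, 1]`.
-/

open Finset SimpleGraph

/-- The subtrees of `G` containing `v`, counted by `N(G, v)`. -/
def subtreesContaining {V : Type*} (G : SimpleGraph V) (v : V) : Set (Finset V) :=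
  {S | IsSubtree G S ∧ v ∈ S}

/-- The subtrees of the connected component of `v` in `G`. Counting within a component lets the
arguments delete edges of a tree without changing its vertex set. -/
def componentSubtrees {V : Type*} (G : SimpleGraph V) (v : V) : Set (Finset V) :=
  {S | IsSubtree G S ∧ ∀ x ∈ S, G.Reachable v x}

/-- Every vertex of the connected component of `v`, except possibly `v`, has degree other than `2`:
the condition that a branch of a series-reduced tree satisfies at the vertex where it was cut. -/
def SeriesReducedExceptAt {V : Type*} (G : SimpleGraph V) (v : V) : Prop :=
  ∀ w, G.Reachable v w → w ≠ v → (G.neighborSet w).ncard ≠ 2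

section Subtrees

variable {V : Type*} {G : SimpleGraph V} {S : Finset V} {v x y : V}

lemma isSubtree_singleton (G : SimpleGraph V) (v : V) : IsSubtree G {v} := by
  refine ⟨singleton_nonempty v, ?_⟩
  rw [coe_singleton, induce_singleton_eq_top]
  exact connected_top

lemma IsSubtree.reachable (hS : IsSubtree G S) (hx : x ∈ S) (hy : y ∈ S) : G.Reachable x y :=
  (hS.2.preconnected ⟨x, hx⟩ ⟨y, hy⟩).map (Embedding.induce _).toHom

lemma reachable_of_reflTransGen
    (h : Relation.ReflTransGen (fun y z => G.Adj y z ∧ z ∈ S) v x) : G.Reachable v x :=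
  (reachable_iff_reflTransGen v x).2 (h.lift id fun _ _ => And.left)

lemma isSubtree_iff_reflTransGen (hv : v ∈ S) :
    IsSubtree G S ↔ ∀ x ∈ S, Relation.ReflTransGen (fun y z => G.Adj y z ∧ z ∈ S) v x := by
  constructor
  · intro hS x hx
    exact ((reachable_iff_reflTransGen _ _).1 (hS.2.preconnected ⟨v, hv⟩ ⟨x, hx⟩)).lift
      Subtype.val fun _ z hyz => ⟨hyz, z.2⟩
  · intro h
    have hreach : ∀ x : (S : Set V), (G.induce (S : Set V)).Reachable ⟨v, hv⟩ x := by
      rintro ⟨x, hx⟩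
      induction h x hx with
      | refl => rfl
      | @tail y z hvy hyz ih =>
        have hy : y ∈ S := by
          rcases Relation.ReflTransGen.cases_tail hvy with rfl | ⟨_, _, hy⟩
          exacts [hv, hy.2]
        have hadj : (G.induce (S : Set V)).Adj ⟨y, hy⟩ ⟨z, hx⟩ := hyz.1
        exact (ih hy).trans hadj.reachable
    have : Nonempty (S : Set V) := ⟨⟨v, hv⟩⟩
    exact ⟨⟨v, hv⟩, ⟨fun x y => (hreach x).symm.trans (hreach y)⟩⟩

lemma subtreesContaining_subset_componentSubtrees (G : SimpleGraph V) (v : V) :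
    subtreesContaining G v ⊆ componentSubtrees G v :=
  fun _ hS => ⟨hS.1, fun _ hx => hS.1.reachable hS.2 hx⟩

lemma subtreeProb_eq_ncard_div_ncard [Fintype V] (hG : G.Connected) (v : V) :
    subtreeProb G v = (subtreesContaining G v).ncard / (componentSubtrees G v).ncard := by
  have hcomp : componentSubtrees G v = {S | IsSubtree G S} :=
    Set.ext fun S => and_iff_left fun x _ => hG.preconnected v x
  rw [hcomp]
  rfl

lemma componentSubtrees_of_isIsolated (hv : G.IsIsolated v) : componentSubtrees G v = {{v}} := by
  have hreach : ∀ x, G.Reachable v x → x = v := fun x hx => by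
    rcases ((reachable_iff_reflTransGen v x).1 hx).cases_head with rfl | ⟨w, hw, -⟩
    exacts [rfl, (hv w hw).elim]
  refine Set.Subset.antisymm (fun S hS => ?_) ?_
  · exact eq_singleton_iff_nonempty_unique_mem.2 ⟨hS.1.1, fun x hx => hreach x (hS.2 x hx)⟩
  · rintro _ rfl
    exact ⟨isSubtree_singleton G v, fun x hx => mem_singleton.1 hx ▸ .rfl⟩

lemma subtreesContaining_of_isIsolated (hv : G.IsIsolated v) :
    subtreesContaining G v = {{v}} := by
  refine Set.Subset.antisymm ?_ ?_
  · exact componentSubtrees_of_isIsolated hv ▸ subtreesContaining_subset_componentSubtrees G v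
  · rintro _ rfl
    exact ⟨isSubtree_singleton G v, mem_singleton_self v⟩

end Subtrees

section SupEdge

variable {V : Type*} {H : SimpleGraph V} {v c : V} {S A B : Finset V}

lemma reachable_sup_edge_iff {x : V} :
    (H ⊔ edge v c).Reachable v x ↔ H.Reachable v x ∨ H.Reachable c x := by
  constructor
  · intro h
    induction (reachable_iff_reflTransGen v x).1 h with
    | refl => exact .inl .rfl
    | @tail y z hvy hyz ih =>
      rcases sup_adj .. |>.1 hyz with hyz | hyz
      · have hy := ih ((reachable_iff_reflTransGen _ _).2 hvy)
        exact hy.imp (·.trans hyz.reachable) (·.trans hyz.reachable)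
      · rcases (edge_adj ..).1 hyz with ⟨⟨-, rfl⟩ | ⟨-, rfl⟩, -⟩
        exacts [.inr .rfl, .inl .rfl]
  · have hvc : (H ⊔ edge v c).Reachable v c := by
      rcases eq_or_ne v c with rfl | hne
      exacts [.rfl, Adj.reachable (.inr ((edge_adj ..).2 ⟨.inl ⟨rfl, rfl⟩, hne⟩))]
    rintro (h | h)
    exacts [h.mono le_sup_left, hvc.trans (h.mono le_sup_left)]

lemma isSubtree_sup_edge_iff (hS : ¬(v ∈ S ∧ c ∈ S)) :
    IsSubtree (H ⊔ edge v c) S ↔ IsSubtree H S := by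
  have : (H ⊔ edge v c).induce (S : Set V) = H.induce (S : Set V) := by
    ext ⟨x, hx⟩ ⟨y, hy⟩
    simp only [comap_adj, Function.Embedding.subtype_apply, sup_adj, edge_adj, or_iff_left_iff_imp]
    rintro ⟨⟨rfl, rfl⟩ | ⟨rfl, rfl⟩, -⟩
    exacts [(hS ⟨hx, hy⟩).elim, (hS ⟨hy, hx⟩).elim]
  rw [IsSubtree, IsSubtree, this]

lemma notMem_of_mem_subtreesContaining (hvc : ¬H.Reachable v c) (hA : A ∈ subtreesContaining H v) :
    c ∉ A :=
  fun hc => hvc (hA.1.reachable hA.2 hc)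

lemma neighborSet_sup_edge_left (hvc : v ≠ c) :
    (H ⊔ edge v c).neighborSet v = insert c (H.neighborSet v) := by
  ext x
  simp only [mem_neighborSet, sup_adj, edge_adj, Set.mem_insert_iff]
  grind

lemma neighborSet_sup_edge_of_ne {x : V} (hv : x ≠ v) (hc : x ≠ c) :
    (H ⊔ edge v c).neighborSet x = H.neighborSet x := by
  ext y
  simp only [mem_neighborSet, sup_adj, edge_adj]
  grind

variable [DecidableEq V]

lemma isSubtree_sup_edge_union (hvc : ¬H.Reachable v c) (hA : A ∈ subtreesContaining H v)
    (hB : B ∈ subtreesContaining H c) : IsSubtree (H ⊔ edge v c) (A ∪ B) := by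
  have hv : v ∉ B := notMem_of_mem_subtreesContaining (mt .symm hvc) hB
  have hc : c ∉ A := notMem_of_mem_subtreesContaining hvc hA
  have hA' := (isSubtree_sup_edge_iff (v := v) fun h => hc h.2).2 hA.1
  have hB' := (isSubtree_sup_edge_iff (c := c) fun h => hv h.1).2 hB.1
  refine ⟨hA'.1.mono subset_union_left, ?_⟩
  rw [coe_union]
  exact connected_induce_union hA'.2.preconnected hB'.2.preconnected hA.2 hB.2
    (.inr ((edge_adj ..).2 ⟨.inl ⟨rfl, rfl⟩, fun h => hvc (h ▸ .rfl)⟩))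

open Classical in
lemma filter_reachable_union (hvc : ¬H.Reachable v c) (hA : A ∈ subtreesContaining H v)
    (hB : B ∈ subtreesContaining H c) : {x ∈ A ∪ B | H.Reachable v x} = A := by
  ext x
  simp only [mem_filter, mem_union]
  constructor
  · rintro ⟨hx | hx, hvx⟩
    exacts [hx, (hvc (hvx.trans (hB.1.reachable hx hB.2))).elim]
  · exact fun hx => ⟨.inl hx, hA.1.reachable hA.2 hx⟩

open Classical in
lemma exists_union_of_isSubtree_sup_edge (hvc : ¬H.Reachable v c)
    (hS : IsSubtree (H ⊔ edge v c) S) (hv : v ∈ S) (hc : c ∈ S) :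
    ∃ A ∈ subtreesContaining H v, ∃ B ∈ subtreesContaining H c, A ∪ B = S := by
  set A : Finset V := {x ∈ S | H.Reachable v x} with hA
  set B : Finset V := {x ∈ S | H.Reachable c x} with hB
  have hvA : v ∈ A := mem_filter.2 ⟨hv, .rfl⟩
  have hcB : c ∈ B := mem_filter.2 ⟨hc, .rfl⟩
  have hpath : ∀ x ∈ S,
      Relation.ReflTransGen (fun y z => H.Adj y z ∧ z ∈ A) v x ∨
        Relation.ReflTransGen (fun y z => H.Adj y z ∧ z ∈ B) c x := by
    intro x hx
    induction (isSubtree_iff_reflTransGen hv).1 hS x hx with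
    | refl => exact .inl .refl
    | @tail y z hvy hyz ih =>
      have hy : y ∈ S := by
        rcases hvy.cases_tail with rfl | ⟨_, _, hy⟩
        exacts [hv, hy.2]
      rcases hyz.1 with hadj | hadj
      · refine (ih hy).imp (fun h => h.tail ⟨hadj, ?_⟩) (fun h => h.tail ⟨hadj, ?_⟩)
        · exact mem_filter.2 ⟨hx, (reachable_of_reflTransGen h).trans hadj.reachable⟩
        · exact mem_filter.2 ⟨hx, (reachable_of_reflTransGen h).trans hadj.reachable⟩
      · rcases (edge_adj ..).1 hadj with ⟨⟨-, rfl⟩ | ⟨-, rfl⟩, -⟩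
        exacts [.inr .refl, .inl .refl]
  refine ⟨A, ⟨(isSubtree_iff_reflTransGen hvA).2 fun x hx => ?_, hvA⟩,
    B, ⟨(isSubtree_iff_reflTransGen hcB).2 fun x hx => ?_, hcB⟩, ?_⟩
  · obtain ⟨hxS, hvx⟩ := mem_filter.1 hx
    exact (hpath x hxS).resolve_right fun h =>
      hvc (hvx.trans (reachable_of_reflTransGen h).symm)
  · obtain ⟨hxS, hcx⟩ := mem_filter.1 hx
    exact (hpath x hxS).resolve_left fun h =>
      hvc ((reachable_of_reflTransGen h).trans hcx.symm)
  · rw [hA, hB, ← filter_or]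
    exact filter_true_of_mem fun x hx =>
      (hpath x hx).imp reachable_of_reflTransGen reachable_of_reflTransGen

/-- The subtrees that use both ends of a new edge between two components: unions of a subtree at
one end with a subtree at the other. -/
def unionsAcross (H : SimpleGraph V) (v c : V) : Set (Finset V) :=
  Set.image2 (· ∪ ·) (subtreesContaining H v) (subtreesContaining H c)

lemma subtreesContaining_sup_edge (hvc : ¬H.Reachable v c) :
    subtreesContaining (H ⊔ edge v c) v = subtreesContaining H v ∪ unionsAcross H v c := by
  ext S
  constructor
  · rintro ⟨hS, hv⟩
    by_cases hc : c ∈ S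
    · exact .inr (exists_union_of_isSubtree_sup_edge hvc hS hv hc)
    · exact .inl ⟨(isSubtree_sup_edge_iff fun h => hc h.2).1 hS, hv⟩
  · rintro (hS | ⟨A, hA, B, hB, rfl⟩)
    · have hc := notMem_of_mem_subtreesContaining hvc hS
      exact ⟨(isSubtree_sup_edge_iff fun h => hc h.2).2 hS.1, hS.2⟩
    · exact ⟨isSubtree_sup_edge_union hvc hA hB, mem_union_left B hA.2⟩

lemma componentSubtrees_sup_edge (hvc : ¬H.Reachable v c) :
    componentSubtrees (H ⊔ edge v c) v =
      componentSubtrees H v ∪ componentSubtrees H c ∪ unionsAcross H v c := by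
  ext S
  simp only [componentSubtrees, Set.mem_union, Set.mem_ofPred_eq, reachable_sup_edge_iff]
  constructor
  · rintro ⟨hS, hreach⟩
    by_cases hboth : v ∈ S ∧ c ∈ S
    · exact .inr (exists_union_of_isSubtree_sup_edge hvc hS hboth.1 hboth.2)
    · have hS := (isSubtree_sup_edge_iff hboth).1 hS
      obtain ⟨x, hx⟩ := hS.1
      exact .inl ((hreach x hx).imp (fun h => ⟨hS, fun y hy => h.trans (hS.reachable hx hy)⟩)
        fun h => ⟨hS, fun y hy => h.trans (hS.reachable hx hy)⟩)
  · rintro ((⟨hS, hv⟩ | ⟨hS, hc⟩) | ⟨A, hA, B, hB, rfl⟩)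
    · exact ⟨(isSubtree_sup_edge_iff fun h => hvc (hv c h.2)).2 hS, fun x hx => .inl (hv x hx)⟩
    · exact ⟨(isSubtree_sup_edge_iff fun h => hvc (hc v h.1).symm).2 hS,
        fun x hx => .inr (hc x hx)⟩
    · exact ⟨isSubtree_sup_edge_union hvc hA hB, fun x hx => (mem_union.1 hx).imp
        (hA.1.reachable hA.2) (hB.1.reachable hB.2)⟩

lemma ncard_unionsAcross [Finite V] (hvc : ¬H.Reachable v c) :
    (unionsAcross H v c).ncard =
      (subtreesContaining H v).ncard * (subtreesContaining H c).ncard := by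
  rw [unionsAcross, ← Set.image_prod, Set.InjOn.ncard_image, Set.ncard_prod]
  rintro ⟨A, B⟩ ⟨hA, hB⟩ ⟨A', B'⟩ ⟨hA', hB'⟩ (h : A ∪ B = A' ∪ B')
  dsimp only at hA hB hA' hB'
  have hAA' : A = A' := by
    rw [← filter_reachable_union hvc hA hB, h, filter_reachable_union hvc hA' hB']
  have hBB' : B = B' := by
    rw [← filter_reachable_union (mt .symm hvc) hB hA, union_comm, h, union_comm,
      filter_reachable_union (mt .symm hvc) hB' hA']
  rw [hAA', hBB']

end SupEdge

section SupEdgeCounts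

variable {V : Type*} [Finite V] {H : SimpleGraph V} {v c : V}

lemma ncard_subtreesContaining_sup_edge (hvc : ¬H.Reachable v c) :
    (subtreesContaining (H ⊔ edge v c) v).ncard =
      (subtreesContaining H v).ncard * (1 + (subtreesContaining H c).ncard) := by
  classical
  have hdisj : Disjoint (subtreesContaining H v) (unionsAcross H v c) := by
    rw [Set.disjoint_left]
    rintro _ hS ⟨A, -, B, hB, rfl⟩
    exact notMem_of_mem_subtreesContaining hvc hS (mem_union_right A hB.2)
  rw [subtreesContaining_sup_edge hvc, Set.ncard_union_eq hdisj, ncard_unionsAcross hvc,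
    mul_one_add]

lemma ncard_componentSubtrees_sup_edge (hvc : ¬H.Reachable v c) :
    (componentSubtrees (H ⊔ edge v c) v).ncard =
      (componentSubtrees H v).ncard + (componentSubtrees H c).ncard +
        (subtreesContaining H v).ncard * (subtreesContaining H c).ncard := by
  classical
  have hdisj : Disjoint (componentSubtrees H v) (componentSubtrees H c) := by
    rw [Set.disjoint_left]
    rintro S ⟨hS, hv⟩ ⟨-, hc⟩
    obtain ⟨x, hx⟩ := hS.1
    exact hvc ((hv x hx).trans (hc x hx).symm)
  have hdisj' : Disjoint (componentSubtrees H v ∪ componentSubtrees H c) (unionsAcross H v c) := by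
    rw [Set.disjoint_left]
    rintro _ hS ⟨A, hA, B, hB, rfl⟩
    rcases hS with hS | hS
    · exact hvc (hS.2 c (mem_union_right A hB.2))
    · exact hvc (hS.2 v (mem_union_left B hA.2)).symm
  rw [componentSubtrees_sup_edge hvc, Set.ncard_union_eq hdisj', Set.ncard_union_eq hdisj,
    ncard_unionsAcross hvc]

lemma ncard_neighborSet_sup_edge_left (hvc : ¬H.Reachable v c) :
    ((H ⊔ edge v c).neighborSet v).ncard = (H.neighborSet v).ncard + 1 := by
  have hne : v ≠ c := by rintro rfl; exact hvc .rfl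
  rw [neighborSet_sup_edge_left hne,
    Set.ncard_insert_of_notMem (s := H.neighborSet v) fun h => hvc h.reachable]

lemma seriesReducedExceptAt_sup_edge_iff (hvc : ¬H.Reachable v c) :
    SeriesReducedExceptAt (H ⊔ edge v c) v ↔
      SeriesReducedExceptAt H v ∧ SeriesReducedExceptAt H c ∧ (H.neighborSet c).ncard ≠ 1 := by
  have hne : c ≠ v := fun h => hvc (h ▸ .rfl)
  have hdeg : ((H ⊔ edge v c).neighborSet c).ncard = (H.neighborSet c).ncard + 1 := by
    rw [edge_comm, ncard_neighborSet_sup_edge_left (mt .symm hvc)]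
  constructor
  · intro h
    refine ⟨fun w hw hwv => ?_, fun w hw hwc => ?_, fun hc => ?_⟩
    · have hwc : w ≠ c := by rintro rfl; exact hvc hw
      rw [← neighborSet_sup_edge_of_ne hwv hwc]
      exact h w (reachable_sup_edge_iff.2 (.inl hw)) hwv
    · have hwv : w ≠ v := fun hwv => hvc (hwv ▸ hw).symm
      rw [← neighborSet_sup_edge_of_ne hwv hwc]
      exact h w (reachable_sup_edge_iff.2 (.inr hw)) hwv
    · exact h c (reachable_sup_edge_iff.2 (.inr .rfl)) hne (by rw [hdeg, hc])
  · rintro ⟨hv, hc, hc1⟩ w hw hwv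
    rcases eq_or_ne w c with rfl | hwc
    · rwa [hdeg, Ne, Nat.add_left_inj]
    · rw [neighborSet_sup_edge_of_ne hwv hwc]
      exact (reachable_sup_edge_iff.1 hw).elim (hv w · hwv) (hc w · hwc)

end SupEdgeCounts

lemma exists_eq_sup_edge_of_not_isIsolated {V : Type*} {G : SimpleGraph V} (hG : G.IsAcyclic)
    {v : V} (hv : ¬G.IsIsolated v) : ∃ H < G, ∃ c, ¬H.Reachable v c ∧ G = H ⊔ edge v c := by
  obtain ⟨c, hc⟩ := exists_adj_iff_not_isIsolated.2 hv
  refine ⟨G.deleteEdges {s(v, c)}, ?_, c, ?_, ?_⟩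
  · exact (deleteEdges_le _).lt_of_not_ge fun h => by simpa using h hc
  · exact isBridge_iff.1 (isAcyclic_iff_forall_adj_isBridge.1 hG hc)
  · exact (sdiff_sup_cancel ((edge_le_iff G).2 (.inr hc))).symm

/-- The triples `(k, a, n)` realised by a vertex `v` of a tree in which every vertex other than `v`
has degree different from `2`: the degree of `v`, the number of subtrees containing `v`, and the
number of all subtrees. The constructor `join` attaches a tree to `v` by a new edge. -/
inductive TreeProfile : ℕ → ℕ → ℕ → Prop
  | leaf : TreeProfile 0 1 1
  | join {k a n l b m : ℕ} : TreeProfile k a n → TreeProfile l b m → l ≠ 1 →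
      TreeProfile (k + 1) (a * (1 + b)) (n + m + a * b)

theorem treeProfile_of_isAcyclic {V : Type*} [Finite V] {G : SimpleGraph V} (hG : G.IsAcyclic)
    {v : V} (hv : SeriesReducedExceptAt G v) :
    TreeProfile (G.neighborSet v).ncard (subtreesContaining G v).ncard
      (componentSubtrees G v).ncard := by
  induction G using WellFoundedLT.induction generalizing v with
  | ind G ih =>
    by_cases hiso : G.IsIsolated v
    · rw [(neighborSet_eq_empty G).2 hiso, subtreesContaining_of_isIsolated hiso,
        componentSubtrees_of_isIsolated hiso]
      simpa using TreeProfile.leaf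
    · obtain ⟨H, hHG, c, hvc, rfl⟩ := exists_eq_sup_edge_of_not_isIsolated hG hiso
      obtain ⟨hHv, hHc, hc⟩ := (seriesReducedExceptAt_sup_edge_iff hvc).1 hv
      have hH := hG.anti hHG.le
      rw [ncard_neighborSet_sup_edge_left hvc, ncard_subtreesContaining_sup_edge hvc,
        ncard_componentSubtrees_sup_edge hvc]
      exact (ih H hHG hH hHv).join (ih H hHG hH hHc) hc

lemma add_one_le_two_mul_of_two_pow_mul_le {k : ℕ} {a n : ℤ} (hk : 2 ≤ k) (hn : a + k ≤ n)
    (h : 2 ^ k * (n - a - k + 4) ≤ 4 * a) : n + 1 ≤ 2 * a := by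
  have h4 : (2 : ℤ) ^ 2 ≤ 2 ^ k := pow_le_pow_right₀ one_le_two hk
  have hk1 : (k + 1 : ℤ) ≤ 2 ^ k := mod_cast k.lt_two_pow_self
  nlinarith

namespace TreeProfile

variable {k a n : ℕ}

lemma pos (h : TreeProfile k a n) : 0 < a := by
  induction h with
  | leaf => exact one_pos
  | join => positivity

lemma eq_one_of_degree_eq_zero (h : TreeProfile 0 a n) : a = 1 ∧ n = 1 := by
  cases h
  exact ⟨rfl, rfl⟩

lemma add_le (h : TreeProfile k a n) : a + k ≤ n := by
  induction h with
  | leaf => exact le_rfl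
  | @join k a n l b m _ h' _ ih ih' =>
    have hm : 1 ≤ m := by linarith [h'.pos]
    linarith [mul_one_add a b]

-- Stars attain equality; `n - a - k` counts the subtrees that avoid the root and are not single
-- neighbours of the root.
theorem two_pow_mul_le (h : TreeProfile k a n) : 2 ^ k * (n - a - k + 4 : ℤ) ≤ 4 * a := by
  induction h with
  | leaf => norm_num
  | @join k a n l b m h h' hl ih ih' =>
    have hn : (a + k : ℤ) ≤ n := mod_cast h.add_le
    have hb : (1 : ℤ) ≤ b := mod_cast h'.pos
    have hm : (m + 1 : ℤ) ≤ 2 * b := by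
      rcases l.eq_zero_or_pos with rfl | hl0
      · obtain ⟨rfl, rfl⟩ := h'.eq_one_of_degree_eq_zero
        norm_num
      · exact add_one_le_two_mul_of_two_pow_mul_le (by omega) (mod_cast h'.add_le) ih'
    push_cast
    calc 2 ^ (k + 1) * (n + m + a * b - a * (1 + b) - (k + 1) + 4 : ℤ)
        = 2 ^ k * (2 * (n - a - k) + 2 * m + 6) := by ring
      _ ≤ 2 ^ k * ((n - a - k + 4) * (1 + b)) := by gcongr; nlinarith
      _ = 2 ^ k * (n - a - k + 4) * (1 + b) := by ring
      _ ≤ 4 * a * (1 + b) := by gcongr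
      _ = 4 * (a * (1 + b)) := by ring

lemma add_one_le_two_mul (h : TreeProfile k a n) (hk : 2 ≤ k) : n + 1 ≤ 2 * a := by
  exact_mod_cast add_one_le_two_mul_of_two_pow_mul_le hk (mod_cast h.add_le) h.two_pow_mul_le

lemma two_mul_le_three_mul (h : TreeProfile k a n) (hk : 3 ≤ k) : 2 * n ≤ 3 * a := by
  have hn : (a + k : ℤ) ≤ n := mod_cast h.add_le
  have h8 : (2 : ℤ) ^ 3 ≤ 2 ^ k := pow_le_pow_right₀ one_le_two hk
  have hk2 : (2 * k : ℤ) ≤ 2 ^ k := by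
    obtain ⟨j, rfl⟩ : ∃ j, k = j + 1 := ⟨k - 1, by omega⟩
    have hj : (j + 1 : ℤ) ≤ 2 ^ j := mod_cast j.lt_two_pow_self
    push_cast
    linarith [pow_succ (2 : ℤ) j]
  zify
  nlinarith [h.two_pow_mul_le]

end TreeProfile

/-- The component of `v` in `G` realises the triple `(k, a, n)` in the sense of `TreeProfile`: the
graph side of that arithmetic predicate. -/
structure HasProfile {V : Type*} (G : SimpleGraph V) (v : V) (k a n : ℕ) : Prop where
  seriesReducedExceptAt : SeriesReducedExceptAt G v
  ncard_neighborSet : (G.neighborSet v).ncard = k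
  ncard_subtreesContaining : (subtreesContaining G v).ncard = a
  ncard_componentSubtrees : (componentSubtrees G v).ncard = n

section Transport

variable {V W : Type*} {G : SimpleGraph V} {G' : SimpleGraph W} {v : V}

lemma isSubtree_map_iff (φ : G ↪g G') {S : Finset V} :
    IsSubtree G' (S.map φ.toEmbedding) ↔ IsSubtree G S := by
  let e : G.induce (S : Set V) ≃g G'.induce (φ '' S) :=
    { Equiv.Set.image φ S φ.injective with map_rel_iff' := φ.map_rel_iff }
  rw [IsSubtree, IsSubtree, map_nonempty, coe_map]
  exact and_congr_right fun _ => e.connected_iff.symm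

variable {φ : G ↪g G'} (hφ : ∀ x y, G'.Adj (φ x) y → y ∈ Set.range φ)

include hφ

lemma reachable_map_iff {y : W} :
    G'.Reachable (φ v) y ↔ ∃ x, G.Reachable v x ∧ φ x = y := by
  constructor
  · intro h
    induction (reachable_iff_reflTransGen _ _).1 h with
    | refl => exact ⟨v, .rfl, rfl⟩
    | tail hvy hyz ih =>
      obtain ⟨x, hvx, rfl⟩ := ih ((reachable_iff_reflTransGen _ _).2 hvy)
      obtain ⟨z, rfl⟩ := hφ _ _ hyz
      exact ⟨z, hvx.trans (φ.map_adj_iff.1 hyz).reachable, rfl⟩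
  · rintro ⟨x, hvx, rfl⟩
    exact hvx.map φ.toHom

lemma neighborSet_map : G'.neighborSet (φ v) = φ '' G.neighborSet v := by
  ext y
  constructor
  · intro hy
    obtain ⟨x, rfl⟩ := hφ v y hy
    exact ⟨x, φ.map_adj_iff.1 hy, rfl⟩
  · rintro ⟨x, hx, rfl⟩
    exact φ.map_adj_iff.2 hx

lemma componentSubtrees_map :
    componentSubtrees G' (φ v) = Finset.map φ.toEmbedding '' componentSubtrees G v := by
  have hreach {x : V} : G'.Reachable (φ v) (φ x) ↔ G.Reachable v x := by
    simp [reachable_map_iff hφ]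
  ext S
  constructor
  · rintro ⟨hS, hvS⟩
    have hrange : ∀ y ∈ S, y ∈ Set.range φ := fun y hy =>
      ((reachable_map_iff hφ).1 (hvS y hy)).imp fun _ => And.right
    obtain ⟨A, rfl⟩ : ∃ A : Finset V, A.map φ.toEmbedding = S := by
      refine ⟨S.preimage φ φ.injective.injOn, ext fun y => ?_⟩
      simp only [mem_map, mem_preimage]
      constructor
      · rintro ⟨x, hx, rfl⟩
        exact hx
      · intro hy
        obtain ⟨x, rfl⟩ := hrange y hy
        exact ⟨x, hy, rfl⟩
    exact ⟨A, ⟨(isSubtree_map_iff φ).1 hS, fun x hx => hreach.1 (hvS _ (mem_map_of_mem _ hx))⟩, rfl⟩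
  · rintro ⟨A, ⟨hA, hvA⟩, rfl⟩
    refine ⟨(isSubtree_map_iff φ).2 hA, fun y hy => ?_⟩
    obtain ⟨x, hx, rfl⟩ := mem_map.1 hy
    exact hreach.2 (hvA x hx)

lemma subtreesContaining_map :
    subtreesContaining G' (φ v) = Finset.map φ.toEmbedding '' subtreesContaining G v := by
  ext S
  constructor
  · intro hS
    obtain ⟨A, hA, rfl⟩ := (componentSubtrees_map hφ).subset
      (subtreesContaining_subset_componentSubtrees G' (φ v) hS)
    exact ⟨A, ⟨hA.1, (mem_map' φ.toEmbedding).1 hS.2⟩, rfl⟩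
  · rintro ⟨A, hA, rfl⟩
    exact ⟨(isSubtree_map_iff φ).2 hA.1, mem_map_of_mem φ.toEmbedding hA.2⟩

theorem HasProfile.map {k a n : ℕ} (h : HasProfile G v k a n) : HasProfile G' (φ v) k a n where
  seriesReducedExceptAt y hy hyv := by
    obtain ⟨x, hvx, rfl⟩ := (reachable_map_iff hφ).1 hy
    rw [neighborSet_map hφ, Set.ncard_image_of_injective _ φ.injective]
    exact h.seriesReducedExceptAt x hvx (mt (congrArg φ) hyv)
  ncard_neighborSet := by
    rw [neighborSet_map hφ, Set.ncard_image_of_injective _ φ.injective, h.ncard_neighborSet]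
  ncard_subtreesContaining := by
    rw [subtreesContaining_map hφ, Set.ncard_image_of_injective _ (Finset.map_injective _),
      h.ncard_subtreesContaining]
  ncard_componentSubtrees := by
    rw [componentSubtrees_map hφ, Set.ncard_image_of_injective _ (Finset.map_injective _),
      h.ncard_componentSubtrees]

end Transport

theorem HasProfile.sup_edge {V : Type*} [Finite V] {H : SimpleGraph V} {v c : V}
    {k a n l b m : ℕ} (hv : HasProfile H v k a n) (hc : HasProfile H c l b m)
    (hvc : ¬H.Reachable v c) (hl : l ≠ 1) :
    HasProfile (H ⊔ edge v c) v (k + 1) (a * (1 + b)) (n + m + a * b) where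
  seriesReducedExceptAt := (seriesReducedExceptAt_sup_edge_iff hvc).2
    ⟨hv.seriesReducedExceptAt, hc.seriesReducedExceptAt, hc.ncard_neighborSet ▸ hl⟩
  ncard_neighborSet := by
    rw [ncard_neighborSet_sup_edge_left hvc, hv.ncard_neighborSet]
  ncard_subtreesContaining := by
    rw [ncard_subtreesContaining_sup_edge hvc, hv.ncard_subtreesContaining,
      hc.ncard_subtreesContaining]
  ncard_componentSubtrees := by
    rw [ncard_componentSubtrees_sup_edge hvc, hv.ncard_subtreesContaining,
      hc.ncard_subtreesContaining, hv.ncard_componentSubtrees, hc.ncard_componentSubtrees]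

lemma isTree_sum_sup_edge {V W : Type*} [Finite V] [Finite W] {G : SimpleGraph V}
    {H : SimpleGraph W} (hG : G.IsTree) (hH : H.IsTree) (v : V) (w : W) :
    ((G ⊕g H) ⊔ edge (.inl v) (.inr w)).IsTree := by
  have hG' := (isTree_iff_connected_and_card.1 hG).2
  have hH' := (isTree_iff_connected_and_card.1 hH).2
  have hsum : (G ⊕g H).edgeSet.ncard = Nat.card G.edgeSet + Nat.card H.edgeSet := by
    rw [← Nat.card_coe_set_eq, Nat.card_congr edgeSetSumEquiv, Nat.card_sum]
  have hnew : s(.inl v, .inr w) ∉ (G ⊕g H).edgeSet := not_adj_sum_inl_inr (G := G) (H := H) v w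
  refine isTree_iff_connected_and_card.2 ⟨hG.connected.sum_sup_edge hH.connected, ?_⟩
  rw [edgeSet_sup, edgeSet_edge_of_ne Sum.inl_ne_inr, Nat.card_coe_set_eq, Set.union_singleton,
    Set.ncard_insert_of_notMem hnew, hsum, Nat.card_sum]
  omega

theorem TreeProfile.exists_isTree {k a n : ℕ} (h : TreeProfile k a n) :
    ∃ (V : Type) (_ : Finite V) (G : SimpleGraph V) (v : V), G.IsTree ∧ HasProfile G v k a n := by
  induction h with
  | leaf =>
    have hiso : (⊥ : SimpleGraph Unit).IsIsolated () := .bot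
    refine ⟨Unit, inferInstance, ⊥, (), .of_subsingleton, fun _ _ h => (h rfl).elim, ?_, ?_, ?_⟩
    · rw [(neighborSet_eq_empty _).2 hiso, Set.ncard_empty]
    · rw [subtreesContaining_of_isIsolated hiso, Set.ncard_singleton]
    · rw [componentSubtrees_of_isIsolated hiso, Set.ncard_singleton]
  | join _ _ hl ih ih' =>
    obtain ⟨V, _, G, v, hG, hv⟩ := ih
    obtain ⟨W, _, H, w, hH, hw⟩ := ih'
    refine ⟨V ⊕ W, inferInstance, (G ⊕g H) ⊔ edge (.inl v) (.inr w), .inl v,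
      isTree_sum_sup_edge hG hH v w, .sup_edge ?_ ?_ (not_reachable_sum_inl_inr v w) hl⟩
    · refine hv.map (φ := Embedding.sumInl) fun
        | _, .inl y, _ => ⟨y, rfl⟩
        | x, .inr y, h => (not_adj_sum_inl_inr x y h).elim
    · refine hw.map (φ := Embedding.sumInr) fun
        | x, .inl y, h => (not_adj_sum_inl_inr y x h.symm).elim
        | _, .inr y, _ => ⟨y, rfl⟩

namespace TreeProfile

variable {k a n : ℕ}

lemma newRoot (h : TreeProfile k a n) (hk : k ≠ 1) : TreeProfile 1 (1 + a) (1 + n + a) := by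
  simpa only [one_mul] using leaf.join h hk

lemma addLeaf (h : TreeProfile k a n) : TreeProfile (k + 1) (a * 2) (n + 1 + a) := by
  simpa only [mul_one, one_add_one_eq_two] using h.join leaf zero_ne_one

lemma star (k : ℕ) : TreeProfile k (2 ^ k) (2 ^ k + k) := by
  induction k with
  | zero => exact leaf
  | succ k ih =>
    have hn : 2 ^ (k + 1) + (k + 1) = 2 ^ k + k + 1 + 2 ^ k := by omega
    rw [hn, pow_succ]
    exact ih.addLeaf

lemma one_le_div (h : TreeProfile k a n) : (1 : ℝ) ≤ n / a := by
  have ha : (0 : ℝ) < a := mod_cast h.pos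
  exact (one_le_div₀ ha).2 (mod_cast (Nat.le_add_right a k).trans h.add_le)

lemma div_le_two (h : TreeProfile k a n) (hk : 2 ≤ k) : (n / a : ℝ) ≤ 2 := by
  have ha : (0 : ℝ) < a := mod_cast h.pos
  exact (div_le_iff₀ ha).2 (mod_cast (Nat.le_succ n).trans (h.add_one_le_two_mul hk))

lemma abs_addLeaf_div_sub_le (h : TreeProfile k a n) (s : ℝ) :
    |((n + 1 + a : ℕ) / (a * 2 : ℕ) : ℝ) - (s + 1) / 2| ≤ |n / a - s| / 2 + (a : ℝ)⁻¹ / 2 := by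
  have ha : (0 : ℝ) < a := mod_cast h.pos
  have heq : ((n + 1 + a : ℕ) / (a * 2 : ℕ) : ℝ) - (s + 1) / 2 =
      (n / a - s) / 2 + (a : ℝ)⁻¹ / 2 := by
    push_cast
    field_simp
    ring
  rw [heq]
  refine (abs_add_le _ _).trans_eq ?_
  rw [abs_div, abs_two, abs_of_pos (by positivity : (0 : ℝ) < (a : ℝ)⁻¹ / 2)]

lemma abs_newRoot_addLeaf_div_sub_le (h : TreeProfile k a n) (hk : 2 ≤ k) (s : ℝ) :
    |((1 + n + a + 1 + (1 + a) : ℕ) / ((1 + a) * 2 : ℕ) : ℝ) - (s / 2 + 1)| ≤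
      |n / a - s| / 2 + (a : ℝ)⁻¹ / 2 := by
  have ha : (0 : ℝ) < a := mod_cast h.pos
  have heq : ((1 + n + a + 1 + (1 + a) : ℕ) / ((1 + a) * 2 : ℕ) : ℝ) - (s / 2 + 1) =
      (n / a - s) / 2 + (1 - n / a) * (((1 + a : ℝ))⁻¹ / 2) := by
    push_cast
    field_simp
    ring
  have hle : |(1 - n / a : ℝ)| ≤ 1 :=
    abs_le.2 ⟨by linarith [h.div_le_two hk], by linarith [h.one_le_div]⟩
  rw [heq]
  refine (abs_add_le _ _).trans ?_
  rw [abs_div, abs_two, abs_mul, abs_of_pos (by positivity : (0 : ℝ) < (1 + a : ℝ)⁻¹ / 2)]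
  gcongr
  calc |(1 - n / a : ℝ)| * ((1 + a : ℝ)⁻¹ / 2) ≤ 1 * ((a : ℝ)⁻¹ / 2) := by gcongr; linarith
    _ = (a : ℝ)⁻¹ / 2 := one_mul _

lemma exists_abs_div_sub_le_pow {ε : ℝ} (hε : 0 < ε) (j : ℕ) {t : ℝ} (ht : t ∈ Set.Icc 1 2) :
    ∃ k a n, TreeProfile k a n ∧ 2 ≤ k ∧ (a : ℝ)⁻¹ ≤ ε ∧ |(n / a : ℝ) - t| ≤ (1 / 2) ^ j + ε := by
  induction j generalizing t with
  | zero =>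
    obtain ⟨k, hk⟩ := exists_pow_lt_of_lt_one hε (one_half_lt_one (α := ℝ))
    have h := star (k + 2)
    refine ⟨_, _, _, h, by omega, ?_, ?_⟩
    · push_cast
      rw [pow_add, mul_inv, ← inv_pow, ← one_div]
      linarith
    · have h1 := h.one_le_div
      have h2 := h.div_le_two (by omega)
      rw [pow_zero, abs_le]
      constructor <;> linarith [ht.1, ht.2]
  | succ j ih =>
    have hhalf : (1 / 2 : ℝ) ^ (j + 1) = (1 / 2) ^ j / 2 := by ring
    rcases le_total t (3 / 2) with htle | htle
    · obtain ⟨k, a, n, h, hk, ha, happrox⟩ :=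
        ih (t := 2 * t - 1) ⟨by linarith [ht.1], by linarith⟩
      refine ⟨_, _, _, h.addLeaf, by omega, ?_, ?_⟩
      · exact (inv_anti₀ (mod_cast h.pos) (mod_cast by omega)).trans ha
      · have := h.abs_addLeaf_div_sub_le (2 * t - 1)
        rw [sub_add_cancel, mul_div_cancel_left₀ t two_ne_zero] at this
        linarith
    · obtain ⟨k, a, n, h, hk, ha, happrox⟩ :=
        ih (t := 2 * (t - 1)) ⟨by linarith, by linarith [ht.2]⟩
      refine ⟨_, _, _, (h.newRoot (by omega)).addLeaf, le_rfl, ?_, ?_⟩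
      · exact (inv_anti₀ (mod_cast h.pos) (mod_cast by omega)).trans ha
      · have := h.abs_newRoot_addLeaf_div_sub_le hk (2 * (t - 1))
        rw [mul_div_cancel_left₀ _ two_ne_zero, sub_add_cancel] at this
        linarith

lemma exists_abs_div_sub_lt {ε : ℝ} (hε : 0 < ε) {t : ℝ} (ht : t ∈ Set.Icc 1 (3 / 2)) :
    ∃ k a n, TreeProfile k a n ∧ 3 ≤ k ∧ |(n / a : ℝ) - t| < ε := by
  obtain ⟨j, hj⟩ := exists_pow_lt_of_lt_one (half_pos hε) (one_half_lt_one (α := ℝ))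
  obtain ⟨k, a, n, h, hk, ha, happrox⟩ := exists_abs_div_sub_le_pow (half_pos hε) j
    (t := 2 * t - 1) ⟨by linarith [ht.1], by linarith [ht.2]⟩
  refine ⟨_, _, _, h.addLeaf, by omega, ?_⟩
  have := h.abs_addLeaf_div_sub_le (2 * t - 1)
  rw [sub_add_cancel, mul_div_cancel_left₀ t two_ne_zero] at this
  linarith

lemma div_mem_Icc (h : TreeProfile k a n) (hk : 3 ≤ k) : (a / n : ℝ) ∈ Set.Icc (2 / 3) 1 := by
  have ha : (0 : ℝ) < a := mod_cast h.pos
  have han : (a : ℝ) ≤ n := mod_cast (Nat.le_add_right a k).trans h.add_le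
  have hna : (2 * n : ℝ) ≤ 3 * a := mod_cast h.two_mul_le_three_mul hk
  have hn := ha.trans_le han
  exact ⟨(div_le_div_iff₀ three_pos hn).2 (by linarith), (div_le_one hn).2 han⟩

theorem closure_ratios :
    closure {x : ℝ | ∃ k a n, TreeProfile k a n ∧ 3 ≤ k ∧ x = a / n} = Set.Icc (2 / 3) 1 := by
  refine Set.Subset.antisymm (closure_minimal ?_ isClosed_Icc) fun y hy => ?_
  · rintro _ ⟨k, a, n, h, hk, rfl⟩
    exact h.div_mem_Icc hk
  · have hy0 : 0 < y := by linarith [hy.1]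
    have hyinv : y⁻¹ ∈ Set.Icc (1 : ℝ) (3 / 2) :=
      ⟨(one_le_inv₀ hy0).2 hy.2, (inv_le_comm₀ hy0 (by norm_num)).2 (by rw [inv_div]; exact hy.1)⟩
    have hmem : y⁻¹ ∈ closure {q : ℝ | ∃ k a n, TreeProfile k a n ∧ 3 ≤ k ∧ q = n / a} := by
      refine Metric.mem_closure_iff.2 fun ε hε => ?_
      obtain ⟨k, a, n, h, hk, hlt⟩ := exists_abs_div_sub_lt hε hyinv
      exact ⟨n / a, ⟨k, a, n, h, hk, rfl⟩, by rwa [_root_.dist_comm, Real.dist_eq]⟩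
    have hinv := mem_closure_image (continuousAt_inv₀ (inv_pos.2 hy0).ne') hmem
    rw [inv_inv] at hinv
    refine closure_mono ?_ hinv
    rintro _ ⟨_, ⟨k, a, n, h, hk, rfl⟩, rfl⟩
    exact ⟨k, a, n, h, hk, inv_div _ _⟩

end TreeProfile

lemma HasProfile.subtreeProb_eq {V : Type*} [Fintype V] {G : SimpleGraph V} {v : V} {k a n : ℕ}
    (h : HasProfile G v k a n) (hG : G.Connected) : subtreeProb G v = a / n := by
  rw [subtreeProb_eq_ncard_div_ncard hG, h.ncard_subtreesContaining, h.ncard_componentSubtrees]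

lemma three_le_ncard_neighborSet {V : Type*} [Finite V] [Nontrivial V] {G : SimpleGraph V}
    (hG : G.Connected) (hred : SeriesReduced G) {v : V} (hv : Nat.card (G.neighborSet v) ≠ 1) :
    3 ≤ Nat.card (G.neighborSet v) := by
  have h0 : Nat.card (G.neighborSet v) ≠ 0 := by
    have := ((neighborSet_nonempty G).2 (hG.preconnected.not_isIsolated v)).to_subtype
    exact Nat.card_pos.ne'
  have h2 : Nat.card (G.neighborSet v) ≠ 2 := hred v
  omega

theorem exists_subtreeProb_iff {x : ℝ} :
    (∃ (n : ℕ) (G : SimpleGraph (Fin n)) (v : Fin n), G.IsTree ∧ SeriesReduced G ∧ 2 < n ∧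
      Nat.card (G.neighborSet v) ≠ 1 ∧ x = subtreeProb G v) ↔
    ∃ k a n, TreeProfile k a n ∧ 3 ≤ k ∧ x = a / n := by
  constructor
  · rintro ⟨N, G, v, hG, hred, hN, hv, rfl⟩
    have : Nontrivial (Fin N) := Fin.nontrivial_iff_two_le.2 hN.le
    have hprofile := treeProfile_of_isAcyclic (v := v) hG.isAcyclic fun w _ _ => hred w
    exact ⟨_, _, _, hprofile, three_le_ncard_neighborSet hG.connected hred hv,
      subtreeProb_eq_ncard_div_ncard hG.connected v⟩
  · rintro ⟨k, a, n, h, hk, rfl⟩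
    obtain ⟨V, _, G, v, hG, hv⟩ := h.exists_isTree
    let e : G ≃g _ := Iso.map (Finite.equivFin V) G
    have hG' := e.isTree_iff.1 hG
    have hv' := hv.map (φ := e.toEmbedding) fun _ y _ => e.surjective y
    have hdeg := hv'.ncard_neighborSet
    refine ⟨Nat.card V, _, e v, hG', fun w => ?_, ?_, ?_, (hv'.subtreeProb_eq hG'.connected).symm⟩
    · rcases eq_or_ne w (e v) with rfl | hw
      · exact hdeg.trans_ne (by omega)
      · exact hv'.seriesReducedExceptAt w (hG'.connected _ _) hw
    · calc 2 < k := hk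
        _ = (G.neighborSet v).ncard := hv.ncard_neighborSet.symm
        _ ≤ Nat.card V := Set.ncard_le_card _
    · exact hdeg.trans_ne (by omega)

theorem stmt14 :
    (∀ (n : ℕ) (G : SimpleGraph (Fin n)) (v : Fin n), G.IsTree → SeriesReduced G →
      2 < n → Nat.card (G.neighborSet v) ≠ 1 →
      subtreeProb G v ∈ Set.Icc (2 / 3 : ℝ) 1) ∧
    closure {x : ℝ | ∃ (n : ℕ) (G : SimpleGraph (Fin n)) (v : Fin n),
      G.IsTree ∧ SeriesReduced G ∧ 2 < n ∧ Nat.card (G.neighborSet v) ≠ 1 ∧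
      x = subtreeProb G v} = Set.Icc (2 / 3 : ℝ) 1 := by
  constructor
  · intro n G v hG hred hn hv
    obtain ⟨k, a, m, h, hk, hp⟩ := exists_subtreeProb_iff.1 ⟨n, G, v, hG, hred, hn, hv, rfl⟩
    exact hp ▸ h.div_mem_Icc hk
  · simp only [exists_subtreeProb_iff]
    exact TreeProfile.closure_ratios
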